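/- (One-step recursion of APMD.) Let (π_k) be APMD iterates: π_{k+1}(·|s) = argmin_{p∈Δ_A} { η_k[⟨Q_{τ_k}^{π_k}(s,·), p⟩ + h^p(s) + τ_k D_{π_0}^p(s)] + D_{π_k}^p(s) } for every s, where π_0 is the uniform policy. If 1 + η_k τ_k = 1/γ and τ_k ≥ τ_{k+1} ≥ 0, then Σ_s ν*(s) [ V_{τ_{k+1}}^{π_{k+1}}(s) − V_{τ_{k+1}}^{π*}(s) + (τ_{k+1}/(1−γ)) D_{π_{k+1}}^{π*}(s) ] ≤ γ Σ_s ν*(s) [ V_{τ_k}^{π_k}(s) − V_{τ_k}^{π*}(s) + (τ_k/(1−γ)) D_{π_k}^{π*}(s) ] + ((τ_k − τ_{k+1})/(1−γ)) log|A|. -/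

import Mathlib

open Finset

noncomputable section

namespace RL

/-- The probability simplex on a finite set `A`. -/
def simplex (A : Type*) [Fintype A] : Set (A → ℝ) :=
  {p | (∀ a, 0 ≤ p a) ∧ ∑ a, p a = 1}

/-- A policy assigns to each state a distribution over actions. -/
def IsPolicy {S A : Type*} [Fintype A] (π : S → A → ℝ) : Prop :=
  ∀ s, π s ∈ simplex A

/-- `KL q p` is the Bregman (KL) divergence `D_q^p = ∑_a p a * log (p a / q a)`. -/
def KL {A : Type*} [Fintype A] (q p : A → ℝ) : ℝ :=
  ∑ a, p a * Real.log (p a / q a)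

/-- The state transition matrix `P^π` induced by policy `π`. -/
def Pmat {S A : Type*} [Fintype A] (P : S → A → S → ℝ) (π : S → A → ℝ) :
    Matrix S S ℝ :=
  Matrix.of fun s s' => ∑ a, π s a * P s a s'

/-- `V` satisfies the Bellman equation for policy `π`, cost `c`, regularizer `h`,
and discount factor `γ`. -/
def IsValue {S A : Type*} [Fintype S] [Fintype A] (P : S → A → S → ℝ)
    (c : S → A → ℝ) (h : S → (A → ℝ) → ℝ) (γ : ℝ) (π : S → A → ℝ)
    (V : S → ℝ) : Prop :=
  ∀ s, V s = (∑ a, π s a * c s a) + h s (π s)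
    + γ * ∑ s', (∑ a, π s a * P s a s') * V s'

/-- The action-value function `Q^π` determined by a state-value function `V`. -/
def Qfun {S A : Type*} [Fintype S] (P : S → A → S → ℝ) (c : S → A → ℝ)
    (h : S → (A → ℝ) → ℝ) (γ : ℝ) (π : S → A → ℝ) (V : S → ℝ) :
    S → A → ℝ :=
  fun s a => c s a + h s (π s) + γ * ∑ s', P s a s' * V s'

/-- The discounted state-visitation distribution `d_s^π(s')`. -/
def dvisit {S A : Type*} [Fintype S] [Fintype A] [DecidableEq S]
    (P : S → A → S → ℝ) (γ : ℝ) (π : S → A → ℝ) (s s' : S) : ℝ :=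
  (1 - γ) * ∑' t : ℕ, γ ^ t * ((Pmat P π) ^ t) s s'

/-- `next` minimizes `p ↦ η * (⟨G, p⟩ + hreg p) + KL base p` over the simplex. -/
def IsProxStep {A : Type*} [Fintype A] (G : A → ℝ) (hreg : (A → ℝ) → ℝ)
    (η : ℝ) (base next : A → ℝ) : Prop :=
  next ∈ simplex A ∧ ∀ p ∈ simplex A,
    η * ((∑ a, G a * next a) + hreg next) + KL base next ≤
      η * ((∑ a, G a * p a) + hreg p) + KL base p

/-- `h` is convex with modulus `μ` relative to KL, with subgradients `h'`. -/
def ConvexReg {S A : Type*} [Fintype A] (h : S → (A → ℝ) → ℝ)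
    (h' : S → (A → ℝ) → A → ℝ) (μ : ℝ) : Prop :=
  ∀ s : S, ∀ p ∈ simplex A, ∀ q ∈ simplex A,
    μ * KL q p ≤ h s p - (h s q + ∑ a, h' s q a * (p a - q a))

/-! Along a segment, `KL v` is strongly convex relative to KL with modulus exactly `1`, so the
objective of the mirror-descent step has modulus `1 + η τ = 1 / γ`, and its minimizer `π'`
satisfies, for every policy `w`, the three-point inequality
`η (T^{π'} V) + D_π^{π'} + (1 / γ) D_{π'}^w ≤ η (T^w V) + D_π^w`,
where `T^w` is the Bellman operator of `w` and `V = V_τ^π`. Minimality against `π` itself gives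
`T^{π'} V ≤ T^π V = V`, so by the comparison principle the value of `π'`, at any smaller
regularization `τ'`, is at most `T^{π'} V`. Dividing by `η` and averaging over an invariant
distribution of `w`, under which `T^w` contracts differences by exactly `γ`, gives the recursion;
the values of `w` at `τ` and `τ'` differ on average by `(τ - τ') / (1 - γ)` times the average of
`D_{π_0}^w`. -/

section Divergence

open InformationTheory

variable {A : Type*} [Fintype A] {p q v : A → ℝ} {t : ℝ}

lemma segment_mem_simplex (hq : q ∈ simplex A) (hp : p ∈ simplex A) (ht : t ∈ Set.Ioo (0 : ℝ) 1) :
    (1 - t) • q + t • p ∈ simplex A :=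
  convex_stdSimplex ℝ A hq hp (sub_nonneg.2 ht.2.le) ht.1.le (sub_add_cancel 1 t)

lemma KL_self (p : A → ℝ) : KL p p = 0 := by
  refine sum_eq_zero fun a _ => ?_
  rcases eq_or_ne (p a) 0 with h0 | h0 <;> simp [h0]

lemma KL_eq_sum_sub (hq : ∀ a, 0 < q a) (p : A → ℝ) :
    KL q p = ∑ a, (p a * Real.log (p a) - p a * Real.log (q a)) := by
  refine sum_congr rfl fun a _ => ?_
  rcases eq_or_ne (p a) 0 with h0 | h0
  · simp [h0]
  · rw [Real.log_div h0 (hq a).ne', mul_sub]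

lemma KL_eq_sum_klFun (hq : q ∈ simplex A) (hq0 : ∀ a, 0 < q a) (hp : p ∈ simplex A) :
    KL q p = ∑ a, q a * klFun (p a / q a) := by
  have hterm (a : A) :
      q a * klFun (p a / q a) = p a * Real.log (p a / q a) + (q a - p a) := by
    have := (hq0 a).ne'
    rw [klFun_apply]
    field_simp
    ring
  simp only [hterm, sum_add_distrib, sum_sub_distrib, hq.2, hp.2, sub_self, add_zero, KL]

lemma KL_nonneg (hq : q ∈ simplex A) (hq0 : ∀ a, 0 < q a) (hp : p ∈ simplex A) : 0 ≤ KL q p := by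
  rw [KL_eq_sum_klFun hq hq0 hp]
  exact sum_nonneg fun a _ =>
    mul_nonneg (hq0 a).le (klFun_nonneg (div_nonneg (hp.1 a) (hq0 a).le))

lemma klFun_le_sq {x : ℝ} (hx : 0 ≤ x) : klFun x ≤ (x - 1) ^ 2 := by
  rcases hx.eq_or_lt with rfl | hx0
  · simp [klFun_zero]
  · have hlog := mul_le_mul_of_nonneg_left (Real.log_le_sub_one_of_pos hx0) hx
    rw [klFun_apply]
    linarith

lemma KL_le_sum_sq_div (hq : q ∈ simplex A) (hq0 : ∀ a, 0 < q a) (hp : p ∈ simplex A) :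
    KL q p ≤ ∑ a, (p a - q a) ^ 2 / q a := by
  rw [KL_eq_sum_klFun hq hq0 hp]
  refine sum_le_sum fun a _ => ?_
  calc q a * klFun (p a / q a) ≤ q a * (p a / q a - 1) ^ 2 :=
        mul_le_mul_of_nonneg_left (klFun_le_sq (div_nonneg (hp.1 a) (hq0 a).le)) (hq0 a).le
    _ = (p a - q a) ^ 2 / q a := by
        have := (hq0 a).ne'
        field_simp

lemma KL_segment_le_sq_mul (hq : q ∈ simplex A) (hq0 : ∀ a, 0 < q a) (hp : p ∈ simplex A)
    (ht : t ∈ Set.Ioo (0 : ℝ) 1) :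
    KL q ((1 - t) • q + t • p) ≤ t ^ 2 * ∑ a, (p a - q a) ^ 2 / q a := by
  refine (KL_le_sum_sq_div hq hq0 (segment_mem_simplex hq hp ht)).trans_eq ?_
  rw [mul_sum]
  refine sum_congr rfl fun a _ => ?_
  simp only [Pi.add_apply, Pi.smul_apply, smul_eq_mul]
  ring

lemma KL_segment (hv : ∀ a, 0 < v a) (hq : ∀ a, 0 < q a) (p : A → ℝ) (t : ℝ) :
    KL v ((1 - t) • q + t • p) + (t * KL q p - KL q ((1 - t) • q + t • p)) =
      (1 - t) * KL v q + t * KL v p := by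
  simp only [KL_eq_sum_sub hv, KL_eq_sum_sub hq, mul_sum, ← sum_add_distrib, ← sum_sub_distrib]
  refine sum_congr rfl fun a _ => ?_
  simp only [Pi.add_apply, Pi.smul_apply, smul_eq_mul]
  ring

lemma KL_le_neg_log {ε : ℝ} (hε : 0 < ε) (hq : ∀ a, ε ≤ q a) (hp : p ∈ simplex A) :
    KL q p ≤ -Real.log ε := by
  have hterm (a : A) : p a * Real.log (p a / q a) ≤ p a * -Real.log ε := by
    rcases (hp.1 a).eq_or_lt with h0 | h0
    · simp [← h0]
    have hp1 : p a ≤ 1 := hp.2 ▸ single_le_sum (fun i _ => hp.1 i) (mem_univ a)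
    rw [← Real.log_inv, ← one_div]
    have hq0 : 0 < q a := hε.trans_le (hq a)
    gcongr
    exact hq a
  calc KL q p ≤ ∑ a, p a * -Real.log ε := sum_le_sum fun a _ => hterm a
    _ = -Real.log ε := by rw [← sum_mul, hp.2, one_mul]

lemma sum_mul_KL_uniform_le_log_card {S : Type*} [Fintype S] [Nonempty A] {u w : S → A → ℝ}
    {ν : S → ℝ} (hu : ∀ s a, u s a = 1 / (Fintype.card A : ℝ)) (hw : IsPolicy w)
    (hν : ν ∈ simplex S) :
    ∑ s, ν s * KL (u s) (w s) ≤ Real.log (Fintype.card A) := by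
  have hKL (s : S) : KL (u s) (w s) ≤ Real.log (Fintype.card A) := by
    simpa using KL_le_neg_log (by positivity) (fun a => (hu s a).ge) (hw s)
  calc ∑ s, ν s * KL (u s) (w s) ≤ ∑ s, ν s * Real.log (Fintype.card A) :=
        sum_le_sum fun s _ => mul_le_mul_of_nonneg_left (hKL s) (hν.1 s)
    _ = Real.log (Fintype.card A) := by rw [← sum_mul, hν.2, one_mul]

end Divergence

section StrongConvexity

open Filter Topology

variable {A : Type*} [Fintype A] {f g : (A → ℝ) → ℝ} {m n η : ℝ} {p q : A → ℝ}

/-- Strong convexity of `f` with modulus `m` relative to KL, on the segments of the simplex that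
start at a point `q` of full support. As `f = KL v` turns the inequality into an equality with
`m = 1`, this is convexity of `f - m * KL v` along these segments. -/
def KLStronglyConvex (m : ℝ) (f : (A → ℝ) → ℝ) : Prop :=
  ∀ p ∈ simplex A, ∀ q ∈ simplex A, (∀ a, 0 < q a) → ∀ t ∈ Set.Ioo (0 : ℝ) 1,
    f ((1 - t) • q + t • p) + m * (t * KL q p - KL q ((1 - t) • q + t • p)) ≤
      (1 - t) * f q + t * f p

namespace KLStronglyConvex

lemma add (hf : KLStronglyConvex m f) (hg : KLStronglyConvex n g) :
    KLStronglyConvex (m + n) fun p => f p + g p := by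
  intro p hp q hq hq0 t ht
  linarith [hf p hp q hq hq0 t ht, hg p hp q hq hq0 t ht]

lemma const_mul (hη : 0 ≤ η) (hf : KLStronglyConvex m f) :
    KLStronglyConvex (η * m) fun p => η * f p := by
  intro p hp q hq hq0 t ht
  linarith [mul_le_mul_of_nonneg_left (hf p hp q hq hq0 t ht) hη]

lemma linear (G : A → ℝ) : KLStronglyConvex 0 fun p : A → ℝ => ∑ a, G a * p a := by
  intro p _ q _ _ t _
  simp only [zero_mul, add_zero, mul_sum, ← sum_add_distrib]
  refine (sum_congr rfl fun a _ => ?_).le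
  simp only [Pi.add_apply, Pi.smul_apply, smul_eq_mul]
  ring

lemma kl {v : A → ℝ} (hv : ∀ a, 0 < v a) : KLStronglyConvex 1 (KL v) := by
  intro p _ q _ hq0 t _
  rw [one_mul, KL_segment hv hq0]

/-- Compare `f q` with `f` at the point `q + t (p - q)` and let `t → 0`: the divergence from `q` of
that point is `O(t ^ 2)`. -/
lemma add_mul_KL_le_of_isMinOn (hf : KLStronglyConvex m f) (hm : 0 ≤ m) (hq : q ∈ simplex A)
    (hq0 : ∀ a, 0 < q a) (hmin : IsMinOn f (simplex A) q) (hp : p ∈ simplex A) :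
    f q + m * KL q p ≤ f p := by
  set C := ∑ a, (p a - q a) ^ 2 / q a
  have hgap : ∀ t ∈ Set.Ioo (0 : ℝ) 1, f q + m * KL q p - f p ≤ t * (m * C) := by
    intro t ht
    have hle : f q ≤ f ((1 - t) • q + t • p) := hmin (segment_mem_simplex hq hp ht)
    have hsegment := hf p hp q hq hq0 t ht
    have hsq := mul_le_mul_of_nonneg_left (KL_segment_le_sq_mul hq hq0 hp ht) hm
    refine le_of_mul_le_mul_left ?_ ht.1
    linarith
  have hlim : Tendsto (fun t : ℝ => t * (m * C)) (𝓝[>] 0) (𝓝 0) :=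
    ((continuous_mul_const (m * C)).tendsto' 0 0 (zero_mul _)).mono_left nhdsWithin_le_nhds
  have hgap0 : f q + m * KL q p - f p ≤ 0 :=
    ge_of_tendsto hlim (eventually_of_mem (Ioo_mem_nhdsGT one_pos) hgap)
  linarith

end KLStronglyConvex

/-- Average the subgradient inequalities at the intermediate point `w` of the segment: the linear
terms cancel, and `KL_segment` with `v = w` evaluates the divergences from `w`. -/
lemma ConvexReg.klStronglyConvex {S : Type*} {h : S → (A → ℝ) → ℝ} {h' : S → (A → ℝ) → A → ℝ}
    {μ : ℝ} (hconv : ConvexReg h h' μ) (s : S) : KLStronglyConvex μ (h s) := by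
  intro p hp q hq hq0 t ht
  set w := (1 - t) • q + t • p with hw
  have hwA : w ∈ simplex A := segment_mem_simplex hq hp ht
  have hw0 (a : A) : 0 < w a :=
    add_pos_of_pos_of_nonneg (mul_pos (sub_pos.2 ht.2) (hq0 a)) (mul_nonneg ht.1.le (hp.1 a))
  have hsubq := mul_le_mul_of_nonneg_left (hconv s q hq w hwA) (sub_nonneg.2 ht.2.le)
  have hsubp := mul_le_mul_of_nonneg_left (hconv s p hp w hwA) ht.1.le
  have hlin :
      (1 - t) * ∑ a, h' s w a * (q a - w a) + t * ∑ a, h' s w a * (p a - w a) = 0 := by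
    simp only [mul_sum, ← sum_add_distrib]
    refine sum_eq_zero fun a _ => ?_
    simp only [hw, Pi.add_apply, Pi.smul_apply, smul_eq_mul]
    ring
  have hKL : t * KL q p - KL q w = (1 - t) * KL w q + t * KL w p := by
    rw [← KL_segment hw0 hq0, ← hw, KL_self, zero_add]
  rw [hKL]
  linarith

/-- The regularizer `h + τ D_ρ` obtained from `h` by adding the divergence from the reference
policy `ρ` with weight `τ`. -/
def klReg {S : Type*} (h : S → (A → ℝ) → ℝ) (ρ : S → A → ℝ) (τ : ℝ) : S → (A → ℝ) → ℝ :=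
  fun s p => h s p + τ * KL (ρ s) p

lemma klReg_klStronglyConvex {S : Type*} {s : S} {h : S → (A → ℝ) → ℝ} {h' : S → (A → ℝ) → A → ℝ}
    {μ τ : ℝ} {ρ : S → A → ℝ} (hconv : ConvexReg h h' μ) (hτ : 0 ≤ τ) (hρ0 : ∀ a, 0 < ρ s a) :
    KLStronglyConvex (μ + τ) (klReg h ρ τ s) := by
  have hsum := (hconv.klStronglyConvex s).add ((KLStronglyConvex.kl hρ0).const_mul hτ)
  rwa [mul_one] at hsum

lemma IsProxStep.three_point {G base next : A → ℝ} {H : (A → ℝ) → ℝ}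
    (hstep : IsProxStep G H η base next) (hH : KLStronglyConvex m H) (hη : 0 ≤ η) (hm : 0 ≤ m)
    (hbase : ∀ a, 0 < base a) (hnext : ∀ a, 0 < next a) (hp : p ∈ simplex A) :
    η * ((∑ a, G a * next a) + H next) + KL base next + (1 + η * m) * KL next p ≤
      η * ((∑ a, G a * p a) + H p) + KL base p := by
  have hobj : KLStronglyConvex (η * (0 + m) + 1)
      fun p => η * ((∑ a, G a * p a) + H p) + KL base p :=
    (((KLStronglyConvex.linear G).add hH).const_mul hη).add (.kl hbase)
  rw [zero_add, add_comm (η * m)] at hobj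
  exact hobj.add_mul_KL_le_of_isMinOn (by positivity) hstep.1 hnext hstep.2 hp

end StrongConvexity

section Bellman

open Matrix

variable {S A : Type*} [Fintype A] {P : S → A → S → ℝ} {w : S → A → ℝ}

lemma Pmat_nonneg (hP0 : ∀ s a s', 0 ≤ P s a s') (hw : IsPolicy w) (s s' : S) :
    0 ≤ Pmat P w s s' :=
  sum_nonneg fun a _ => mul_nonneg ((hw s).1 a) (hP0 s a s')

variable [Fintype S]

lemma sum_Pmat (hP1 : ∀ s a, ∑ s', P s a s' = 1) (hw : IsPolicy w) (s : S) :
    ∑ s', Pmat P w s s' = 1 := by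
  simp only [Pmat, of_apply]
  rw [sum_comm]
  simp only [← mul_sum, hP1, mul_one, (hw s).2]

lemma nonpos_of_le_mulVec {M : Matrix S S ℝ} (hM : ∀ i j, 0 ≤ M i j) (hrow : ∀ i, ∑ j, M i j < 1)
    {W : S → ℝ} (hW : W ≤ M *ᵥ W) : W ≤ 0 := by
  intro i
  have : Nonempty S := ⟨i⟩
  obtain ⟨m, hm⟩ := Finite.exists_max W
  have hWm : W m ≤ (∑ j, M m j) * W m :=
    calc W m ≤ ∑ j, M m j * W j := hW m
      _ ≤ ∑ j, M m j * W m := sum_le_sum fun j _ => mul_le_mul_of_nonneg_left (hm j) (hM m j)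
      _ = (∑ j, M m j) * W m := (sum_mul ..).symm
  have hWm0 : W m ≤ 0 := by
    by_contra! hpos
    exact (mul_lt_of_lt_one_left hpos (hrow m)).not_ge hWm
  exact (hm i).trans hWm0

/-- The Bellman operator `T^w` of the policy `w` for the cost `c` and the regularizer `H`; the value
functions of `w` in the sense of `IsValue` are its fixed points. -/
def bellman (P : S → A → S → ℝ) (c : S → A → ℝ) (H : S → (A → ℝ) → ℝ) (γ : ℝ) (w : S → A → ℝ)
    (V : S → ℝ) : S → ℝ :=
  fun s => (∑ a, w s a * c s a) + H s (w s) + γ * (Pmat P w *ᵥ V) s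

variable {c : S → A → ℝ} {H H' : S → (A → ℝ) → ℝ} {γ : ℝ} {V X Y : S → ℝ}

lemma IsValue.bellman_eq (hV : IsValue P c H γ w V) : bellman P c H γ w V = V :=
  funext fun s => (hV s).symm

lemma sum_Qfun_mul_add (π : S → A → ℝ) (s : S) (hw : w s ∈ simplex A) :
    (∑ a, Qfun P c H γ π V s a * w s a) + H s (w s) =
      bellman P c H γ w V s + H s (π s) := by
  have hnext : (Pmat P w *ᵥ V) s = ∑ a, w s a * ∑ s', P s a s' * V s' := by
    simp only [mulVec, dotProduct, Pmat, of_apply, sum_mul, mul_sum, mul_assoc]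
    exact sum_comm
  have hQ : ∑ a, Qfun P c H γ π V s a * w s a =
      (∑ a, w s a * c s a) + (∑ a, w s a) * H s (π s) + γ * (Pmat P w *ᵥ V) s := by
    rw [hnext, sum_mul, mul_sum, ← sum_add_distrib, ← sum_add_distrib]
    refine sum_congr rfl fun a _ => ?_
    rw [Qfun]
    ring
  rw [hQ, hw.2, bellman]
  ring

lemma bellman_sub_bellman (s : S) :
    bellman P c H γ w X s - bellman P c H' γ w Y s =
      H s (w s) - H' s (w s) + γ * (Pmat P w *ᵥ (X - Y)) s := by
  rw [mulVec_sub, Pi.sub_apply, bellman, bellman]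
  ring

lemma bellman_mono (hP0 : ∀ s a s', 0 ≤ P s a s') (hγ0 : 0 ≤ γ) (hw : IsPolicy w)
    (hH : ∀ s, H s (w s) ≤ H' s (w s)) (hXY : X ≤ Y) :
    bellman P c H γ w X ≤ bellman P c H' γ w Y := by
  intro s
  have hmul : (Pmat P w *ᵥ X) s ≤ (Pmat P w *ᵥ Y) s :=
    dotProduct_le_dotProduct_of_nonneg_left hXY (Pmat_nonneg hP0 hw s)
  unfold bellman
  gcongr
  exact hH s

lemma IsValue.le_of_bellman_le (hP0 : ∀ s a s', 0 ≤ P s a s') (hP1 : ∀ s a, ∑ s', P s a s' = 1)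
    (hγ0 : 0 ≤ γ) (hγ1 : γ < 1) (hw : IsPolicy w) (hV : IsValue P c H γ w V)
    (hX : bellman P c H γ w X ≤ X) : V ≤ X := by
  have hrow (s : S) : ∑ s', (γ • Pmat P w) s s' < 1 := by
    simpa only [Matrix.smul_apply, smul_eq_mul, ← mul_sum, sum_Pmat hP1 hw, mul_one]
  have hnonneg (s s' : S) : 0 ≤ (γ • Pmat P w) s s' := mul_nonneg hγ0 (Pmat_nonneg hP0 hw s s')
  refine sub_nonpos.1 (nonpos_of_le_mulVec hnonneg hrow fun s => ?_)
  calc V s - X s ≤ V s - bellman P c H γ w X s := sub_le_sub_left (hX s) _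
    _ = bellman P c H γ w V s - bellman P c H γ w X s := by rw [hV.bellman_eq]
    _ = ((γ • Pmat P w) *ᵥ (V - X)) s := by
        rw [bellman_sub_bellman, sub_self, zero_add, smul_mulVec, Pi.smul_apply, smul_eq_mul]

variable {ν : S → ℝ}

lemma sum_mul_bellman_sub_bellman (hstat : ν ᵥ* Pmat P w = ν) :
    ∑ s, ν s * (bellman P c H γ w X s - bellman P c H' γ w Y s) =
      ∑ s, ν s * (H s (w s) - H' s (w s)) + γ * ∑ s, ν s * (X s - Y s) := by
  have hinv : ∑ s, ν s * (Pmat P w *ᵥ (X - Y)) s = ∑ s, ν s * (X s - Y s) :=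
    (dotProduct_mulVec ν (Pmat P w) (X - Y)).trans (by rw [hstat]; rfl)
  rw [← hinv, mul_sum, ← sum_add_distrib]
  refine sum_congr rfl fun s _ => ?_
  rw [bellman_sub_bellman]
  ring

lemma sum_mul_value_sub_value {U U' : S → ℝ} (hstat : ν ᵥ* Pmat P w = ν) (hγ1 : γ < 1)
    (hU : IsValue P c H γ w U) (hU' : IsValue P c H' γ w U') :
    ∑ s, ν s * (U s - U' s) = (∑ s, ν s * (H s (w s) - H' s (w s))) / (1 - γ) := by
  have hsum : ∑ s, ν s * (U s - U' s) =
      ∑ s, ν s * (H s (w s) - H' s (w s)) + γ * ∑ s, ν s * (U s - U' s) := by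
    rw [← sum_mul_bellman_sub_bellman hstat, hU.bellman_eq, hU'.bellman_eq]
  rw [eq_div_iff (sub_pos.2 hγ1).ne']
  linarith

end Bellman

section PolicyMirrorDescent

variable {S A : Type*} [Fintype S] [Fintype A] {P : S → A → S → ℝ} {c : S → A → ℝ} {γ η m : ℝ}
  {H : S → (A → ℝ) → ℝ} {π π' w : S → A → ℝ} {V : S → ℝ} {s : S}

lemma IsProxStep.bellman_three_point
    (hstep : IsProxStep (Qfun P c H γ π V s) (H s) η (π s) (π' s))
    (hH : KLStronglyConvex m (H s)) (hη : 0 ≤ η) (hm : 0 ≤ m) (hπ0 : ∀ a, 0 < π s a)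
    (hπ'0 : ∀ a, 0 < π' s a) (hw : w s ∈ simplex A) :
    η * bellman P c H γ π' V s + KL (π s) (π' s) + (1 + η * m) * KL (π' s) (w s) ≤
      η * bellman P c H γ w V s + KL (π s) (w s) := by
  have hthree := hstep.three_point hH hη hm hπ0 hπ'0 hw
  rw [sum_Qfun_mul_add π s hstep.1, sum_Qfun_mul_add π s hw] at hthree
  linarith

lemma IsProxStep.bellman_le_bellman
    (hstep : IsProxStep (Qfun P c H γ π V s) (H s) η (π s) (π' s)) (hη : 0 < η)
    (hπ : π s ∈ simplex A) (hπ0 : ∀ a, 0 < π s a) :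
    bellman P c H γ π' V s ≤ bellman P c H γ π V s := by
  have hmin := hstep.2 (π s) hπ
  rw [sum_Qfun_mul_add π s hstep.1, sum_Qfun_mul_add π s hπ, KL_self] at hmin
  refine le_of_mul_le_mul_left ?_ hη
  linarith [KL_nonneg hπ hπ0 hstep.1]

lemma stepSize_pos (hγ0 : 0 < γ) (hγ1 : γ < 1) (hm : 0 ≤ m) (hη : 1 + η * m = 1 / γ) : 0 < η := by
  have hprod : 0 < η * m := by linarith [(one_lt_div hγ0).2 hγ1]
  exact pos_of_mul_pos_left hprod hm

lemma inv_stepSize_eq (hγ0 : 0 < γ) (hγ1 : γ < 1) (hm : 0 ≤ m) (hη : 1 + η * m = 1 / γ) :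
    η⁻¹ = γ * (m / (1 - γ)) := by
  have := (stepSize_pos hγ0 hγ1 hm hη).ne'
  have := (sub_pos.2 hγ1).ne'
  field_simp at hη ⊢
  linarith

lemma IsProxStep.bellman_add_mul_KL_le
    (hstep : IsProxStep (Qfun P c H γ π V s) (H s) η (π s) (π' s))
    (hH : KLStronglyConvex m (H s)) (hγ0 : 0 < γ) (hγ1 : γ < 1) (hm : 0 ≤ m)
    (hη : 1 + η * m = 1 / γ) (hπ : π s ∈ simplex A) (hπ0 : ∀ a, 0 < π s a)
    (hπ'0 : ∀ a, 0 < π' s a) (hw : w s ∈ simplex A) :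
    bellman P c H γ π' V s + m / (1 - γ) * KL (π' s) (w s) ≤
      bellman P c H γ w V s + γ * (m / (1 - γ) * KL (π s) (w s)) := by
  have hη0 := stepSize_pos hγ0 hγ1 hm hη
  have hthree := hstep.bellman_three_point hH hη0.le hm hπ0 hπ'0 hw
  have hKL := KL_nonneg hπ hπ0 hstep.1
  have hinv := inv_stepSize_eq hγ0 hγ1 hm hη
  have hcoeff : m / (1 - γ) = η⁻¹ * (1 / γ) := by
    rw [hinv]
    field_simp
  calc bellman P c H γ π' V s + m / (1 - γ) * KL (π' s) (w s)
      = η⁻¹ * (η * bellman P c H γ π' V s + 1 / γ * KL (π' s) (w s)) := by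
        rw [hcoeff]
        field_simp
    _ ≤ η⁻¹ * (η * bellman P c H γ w V s + KL (π s) (w s)) := by
        rw [hη] at hthree
        exact mul_le_mul_of_nonneg_left (by linarith) (inv_nonneg.2 hη0.le)
    _ = bellman P c H γ w V s + γ * (m / (1 - γ) * KL (π s) (w s)) := by
        rw [mul_add, inv_mul_cancel_left₀ hη0.ne', hinv, mul_assoc]

lemma IsValue.le_bellman_of_isProxStep {H' : S → (A → ℝ) → ℝ} {V' : S → ℝ}
    (hP0 : ∀ s a s', 0 ≤ P s a s') (hP1 : ∀ s a, ∑ s', P s a s' = 1) (hγ0 : 0 ≤ γ) (hγ1 : γ < 1)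
    (hη : 0 < η) (hπ : IsPolicy π) (hπ0 : ∀ s a, 0 < π s a) (hV' : IsValue P c H' γ π' V')
    (hV : IsValue P c H γ π V) (hHH' : ∀ s, H' s (π' s) ≤ H s (π' s))
    (hstep : ∀ s, IsProxStep (Qfun P c H γ π V s) (H s) η (π s) (π' s)) :
    V' ≤ bellman P c H γ π' V := by
  have hπ' : IsPolicy π' := fun s => (hstep s).1
  have himprove : bellman P c H γ π' V ≤ V :=
    calc bellman P c H γ π' V ≤ bellman P c H γ π V :=
          fun s => (hstep s).bellman_le_bellman hη (hπ s) (hπ0 s)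
      _ = V := hV.bellman_eq
  have hV'V : V' ≤ V :=
    hV'.le_of_bellman_le hP0 hP1 hγ0 hγ1 hπ' ((bellman_mono hP0 hγ0 hπ' hHH' le_rfl).trans himprove)
  calc V' = bellman P c H' γ π' V' := hV'.bellman_eq.symm
    _ ≤ bellman P c H γ π' V := bellman_mono hP0 hγ0 hπ' hHH' hV'V

lemma pmd_recursion {H' : S → (A → ℝ) → ℝ} {V' U U' ν : S → ℝ}
    (hP0 : ∀ s a s', 0 ≤ P s a s') (hP1 : ∀ s a, ∑ s', P s a s' = 1) (hγ0 : 0 < γ) (hγ1 : γ < 1)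
    (hm : 0 ≤ m) (hη : 1 + η * m = 1 / γ) (hH : ∀ s, KLStronglyConvex m (H s))
    (hHH' : ∀ s, H' s (π' s) ≤ H s (π' s)) (hπ : IsPolicy π) (hπ0 : ∀ s a, 0 < π s a)
    (hπ'0 : ∀ s a, 0 < π' s a) (hw : IsPolicy w) (hν0 : ∀ s, 0 ≤ ν s)
    (hstat : Matrix.vecMul ν (Pmat P w) = ν)
    (hV : IsValue P c H γ π V) (hV' : IsValue P c H' γ π' V')
    (hU : IsValue P c H γ w U) (hU' : IsValue P c H' γ w U')
    (hstep : ∀ s, IsProxStep (Qfun P c H γ π V s) (H s) η (π s) (π' s)) :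
    ∑ s, ν s * (V' s - U' s + m / (1 - γ) * KL (π' s) (w s)) ≤
      γ * (∑ s, ν s * (V s - U s + m / (1 - γ) * KL (π s) (w s)))
        + (∑ s, ν s * (H s (w s) - H' s (w s))) / (1 - γ) := by
  have hpoint (s : S) : V' s + m / (1 - γ) * KL (π' s) (w s) ≤
      bellman P c H γ w V s + γ * (m / (1 - γ) * KL (π s) (w s)) := by
    have hvalue := hV'.le_bellman_of_isProxStep hP0 hP1 hγ0.le hγ1
      (stepSize_pos hγ0 hγ1 hm hη) hπ hπ0 hV hHH' hstep s
    have hgap := (hstep s).bellman_add_mul_KL_le (hH s) hγ0 hγ1 hm hη (hπ s) (hπ0 s) (hπ'0 s) (hw s)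
    linarith
  have hcontract : ∑ s, ν s * (bellman P c H γ w V s - U s) = γ * ∑ s, ν s * (V s - U s) :=
    calc ∑ s, ν s * (bellman P c H γ w V s - U s)
        = ∑ s, ν s * (bellman P c H γ w V s - bellman P c H γ w U s) := by rw [hU.bellman_eq]
      _ = γ * ∑ s, ν s * (V s - U s) := by simp [sum_mul_bellman_sub_bellman hstat]
  calc ∑ s, ν s * (V' s - U' s + m / (1 - γ) * KL (π' s) (w s))
      ≤ ∑ s, (ν s * (bellman P c H γ w V s - U s)
          + γ * (ν s * (m / (1 - γ) * KL (π s) (w s))) + ν s * (U s - U' s)) :=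
        sum_le_sum fun s _ => by linarith [mul_le_mul_of_nonneg_left (hpoint s) (hν0 s)]
    _ = _ := by
        rw [sum_add_distrib, sum_add_distrib, hcontract, sum_mul_value_sub_value hstat hγ1 hU hU',
          ← mul_sum, ← mul_add, ← sum_add_distrib]
        simp only [mul_add]

end PolicyMirrorDescent

theorem apmd_recursion_general {S A : Type*} [Fintype S] [Fintype A]
    {P : S → A → S → ℝ} (hP0 : ∀ s a s', 0 ≤ P s a s') (hP1 : ∀ s a, ∑ s', P s a s' = 1)
    {c : S → A → ℝ} {γ : ℝ} (hγ0 : 0 < γ) (hγ1 : γ < 1)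
    {h : S → (A → ℝ) → ℝ} {h' : S → (A → ℝ) → A → ℝ} (hconv : ConvexReg h h' 0)
    {ρ π π' w : S → A → ℝ} (hρ : IsPolicy ρ) (hρ0 : ∀ s a, 0 < ρ s a)
    (hπ : IsPolicy π) (hπ0 : ∀ s a, 0 < π s a) (hπ'0 : ∀ s a, 0 < π' s a) (hw : IsPolicy w)
    {ν : S → ℝ} (hν0 : ∀ s, 0 ≤ ν s) (hstat : Matrix.vecMul ν (Pmat P w) = ν)
    {τ τ' η : ℝ} (hτ : 0 ≤ τ) (hτ' : τ' ≤ τ) (hη : 1 + η * τ = 1 / γ) {V V' U U' : S → ℝ}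
    (hV : IsValue P c (klReg h ρ τ) γ π V) (hV' : IsValue P c (klReg h ρ τ') γ π' V')
    (hU : IsValue P c (klReg h ρ τ) γ w U) (hU' : IsValue P c (klReg h ρ τ') γ w U')
    (hstep : ∀ s, IsProxStep (Qfun P c (klReg h ρ τ) γ π V s) (klReg h ρ τ s) η (π s) (π' s)) :
    ∑ s, ν s * (V' s - U' s + τ' / (1 - γ) * KL (π' s) (w s)) ≤
      γ * (∑ s, ν s * (V s - U s + τ / (1 - γ) * KL (π s) (w s)))
        + (τ - τ') / (1 - γ) * ∑ s, ν s * KL (ρ s) (w s) := by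
  have hreg (s : S) : klReg h ρ τ' s (π' s) ≤ klReg h ρ τ s (π' s) :=
    add_le_add_right (mul_le_mul_of_nonneg_right hτ' (KL_nonneg (hρ s) (hρ0 s) (hstep s).1)) _
  have hmodulus (s : S) : KLStronglyConvex τ (klReg h ρ τ s) := by
    simpa only [zero_add] using klReg_klStronglyConvex hconv hτ (hρ0 s)
  have hshift : (∑ s, ν s * (klReg h ρ τ s (w s) - klReg h ρ τ' s (w s))) / (1 - γ) =
      (τ - τ') / (1 - γ) * ∑ s, ν s * KL (ρ s) (w s) := by
    rw [div_mul_eq_mul_div, mul_sum]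
    congr 1
    refine sum_congr rfl fun s _ => ?_
    simp only [klReg]
    ring
  calc ∑ s, ν s * (V' s - U' s + τ' / (1 - γ) * KL (π' s) (w s))
      ≤ ∑ s, ν s * (V' s - U' s + τ / (1 - γ) * KL (π' s) (w s)) := by
        refine sum_le_sum fun s _ => mul_le_mul_of_nonneg_left ?_ (hν0 s)
        have hKL := KL_nonneg (hstep s).1 (hπ'0 s) (hw s)
        have hweight := div_le_div_of_nonneg_right hτ' (sub_pos.2 hγ1).le
        gcongr
    _ ≤ _ := pmd_recursion hP0 hP1 hγ0 hγ1 hτ hη hmodulus hreg hπ hπ0 hπ'0 hw hν0 hstat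
        hV hV' hU hU' hstep
    _ = _ := by rw [hshift]

/-- one-step recursion of APMD: if `1 + η_k τ_k = 1/γ` and
`τ_k ≥ τ_{k+1} ≥ 0`, then
`∑_s ν*(s) [V_{τ_{k+1}}^{π_{k+1}}(s) - V_{τ_{k+1}}^{π*}(s) + (τ_{k+1}/(1-γ)) D_{π_{k+1}}^{π*}(s)]
  ≤ γ ∑_s ν*(s) [V_{τ_k}^{π_k}(s) - V_{τ_k}^{π*}(s) + (τ_k/(1-γ)) D_{π_k}^{π*}(s)]
    + ((τ_k - τ_{k+1})/(1-γ)) log|A|`. -/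
theorem apmd_recursion {S A : Type*} [Fintype S] [Fintype A]
    [Nonempty S] [Nonempty A]
    (P : S → A → S → ℝ) (hP0 : ∀ s a s', 0 ≤ P s a s')
    (hP1 : ∀ s a, ∑ s', P s a s' = 1)
    (c : S → A → ℝ) (γ : ℝ) (hγ0 : 0 < γ) (hγ1 : γ < 1)
    (h : S → (A → ℝ) → ℝ) (h' : S → (A → ℝ) → A → ℝ)
    (hconv : ConvexReg h h' 0)
    (π : ℕ → S → A → ℝ)
    (hunif : ∀ s a, π 0 s a = 1 / (Fintype.card A : ℝ))
    (hpol : ∀ k, IsPolicy (π k)) (hpos : ∀ k s a, 0 < π k s a)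
    (V : ℝ → (S → A → ℝ) → S → ℝ)
    (hV : ∀ τ : ℝ, 0 ≤ τ → ∀ w : S → A → ℝ, IsPolicy w →
      IsValue P c (fun s p => h s p + τ * KL (π 0 s) p) γ w (V τ w))
    (πstar : S → A → ℝ) (hπstar : IsPolicy πstar)
    (hopt : ∀ w : S → A → ℝ, IsPolicy w → ∀ s, V 0 πstar s ≤ V 0 w s)
    (ν : S → ℝ) (hν0 : ∀ s, 0 ≤ ν s) (hν1 : ∑ s, ν s = 1)
    (hstat : ∀ s', ∑ s, ν s * (∑ a, πstar s a * P s a s') = ν s')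
    (τ η : ℕ → ℝ)
    (hτnn : ∀ k, 0 ≤ τ k) (hτdec : ∀ k, τ (k+1) ≤ τ k)
    (hη : ∀ k, 1 + η k * τ k = 1 / γ)
    (hstep : ∀ k s, IsProxStep
      (Qfun P c (fun s' p => h s' p + τ k * KL (π 0 s') p) γ (π k)
        (V (τ k) (π k)) s)
      (fun p => h s p + τ k * KL (π 0 s) p) (η k) (π k s) (π (k+1) s)) :
    ∀ k : ℕ,
      ∑ s, ν s * (V (τ (k+1)) (π (k+1)) s - V (τ (k+1)) πstar s
          + (τ (k+1) / (1 - γ)) * KL (π (k+1) s) (πstar s))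
        ≤ γ * (∑ s, ν s * (V (τ k) (π k) s - V (τ k) πstar s
            + (τ k / (1 - γ)) * KL (π k s) (πstar s)))
          + ((τ k - τ (k+1)) / (1 - γ)) * Real.log (Fintype.card A) := by
  intro k
  have hτk := hτnn k
  refine (apmd_recursion_general hP0 hP1 hγ0 hγ1 hconv (hpol 0) (hpos 0) (hpol k) (hpos k)
    (hpos (k + 1)) hπstar hν0 (funext hstat) hτk (hτdec k) (hη k) (hV _ hτk _ (hpol k))
    (hV _ (hτnn _) _ (hpol _)) (hV _ hτk _ hπstar) (hV _ (hτnn _) _ hπstar) (hstep k)).trans ?_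
  gcongr
  · exact div_nonneg (sub_nonneg.2 (hτdec k)) (sub_pos.2 hγ1).le
  · exact sum_mul_KL_uniform_le_log_card hunif hπstar ⟨hν0, hν1⟩

end RL
end
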